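/- Let S ⊆ {−1,0,1}^d be a nontrivial reflectable stepset and α ∈ (ℝ_{>0})^d. Then for every radius vector ρ ∈ (0,1)^d and every n ≥ 0, the weighted count admits the exact torus-integral representation q_α(n) = (2π)^{−d} ∫_{[0,2π]^d} S(α·z(θ)^{−1})^n · ∏_{k=1}^d (α_k² − z_k(θ)²)/(α_k²·(1 − z_k(θ))) dθ, where z_k(θ) := ρ_k e^{iθ_k} and α·z^{−1} := (α_1/z_1,…,α_d/z_d); in particular the right-hand side is a real number independent of ρ. -/

import Mathlib

/-!
Expanding `S(α/z)^n` over all walks of length `n`, the integrand becomes a finite sum of products of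
one-variable functions. With `z = ρ e^{iθ}`, `0 < ρ < 1`, the mean of `z^m / (1 - z)` over the circle
is the constant Laurent coefficient of `z^m ∑ z^k`, i.e. `1` if `m ≤ 0` and `0` otherwise
(`integral_zpow_div`). Hence a walk ending at `p` contributes `∏ j, (E (p j) - G (p j))`, where
`E m = α^m [m ≥ 0]` and `G m = α^(m-2) [m ≥ 2]` (`integral_factor`).

It remains to identify the sum of these weights over *all* walks with the sum of `∏ j, α j ^ p j` over
confined walks. As `S` is invariant under coordinate sign changes, `G (p j)` may be replaced by
`G (-p j)` (`sum_weight_symm`). The function `∏ j, (E (p j) - G (-p j))` is odd under each reflection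
`p j ↦ -2 - p j`, so its propagation by the step operator vanishes on every hyperplane
`p j = -1` (`iterate_stepOp_eq_zero`). Steps have coordinates at least `-1`, so a walk leaving the
orthant must do so on one of these hyperplanes, and the sum over all walks equals the sum over the
confined ones (`sum_confined`); on the orthant the function is `∏ j, α j ^ p j`.
-/

open scoped BigOperators Classical Real
open MeasureTheory

def IsStepset (d : ℕ) (S : Finset (Fin d → ℤ)) : Prop :=
  ∀ σ ∈ S, ∀ j, σ j = -1 ∨ σ j = 0 ∨ σ j = 1

def Reflectable (d : ℕ) (S : Finset (Fin d → ℤ)) : Prop :=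
  ∀ σ ∈ S, ∀ j, Function.update σ j (-(σ j)) ∈ S

def NontrivialStepset (d : ℕ) (S : Finset (Fin d → ℤ)) : Prop :=
  ∀ j, ∃ σ ∈ S, σ j ≠ 0

def Confined (d : ℕ) {n : ℕ} (w : Fin n → (Fin d → ℤ)) : Prop :=
  ∀ k : ℕ, k ≤ n → ∀ j,
    0 ≤ ∑ i ∈ Finset.univ.filter (fun i : Fin n => (i : ℕ) < k), w i j

noncomputable def qcount (d : ℕ) (S : Finset (Fin d → ℤ)) (α : Fin d → ℝ) (n : ℕ) : ℝ :=
  ∑ w ∈ Finset.univ.filter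
      (fun w : Fin n → {σ // σ ∈ S} => Confined d (fun i => (w i).1)),
    ∏ j, α j ^ (∑ i, (w i).1 j)

/-- The inventory `S(y) = Σ_{σ∈S} y^σ` over `ℂ`. -/
noncomputable def inventoryC (d : ℕ) (S : Finset (Fin d → ℤ)) (y : Fin d → ℂ) : ℂ :=
  ∑ σ ∈ S, ∏ j, y j ^ (σ j)

/-! ### One-variable circle integrals -/

/-- The mean-value property for `1 / (1 - z)` on the circle of radius `r < 1`. -/
lemma integral_inv_one_sub (r : ℝ) (h0 : 0 < r) (h1 : r < 1) :
    ∫ θ in (0 : ℝ)..(2 * π), (1 - circleMap 0 r θ)⁻¹ = 2 * π := by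
  have hd : DiffContOnCl ℂ (fun z : ℂ => (1 - z)⁻¹) (Metric.ball 0 r) := by
    apply DifferentiableOn.diffContOnCl
    intro z hz
    have hz' : z ∈ Metric.closedBall (0 : ℂ) r := Metric.closure_ball_subset_closedBall hz
    have hne : 1 - z ≠ 0 := by
      intro h
      have : z = 1 := by linear_combination -h
      subst this
      simp at hz'
      linarith
    exact (DifferentiableAt.inv (by fun_prop) hne).differentiableWithinAt
  have key := hd.circleIntegral_sub_inv_smul (w := 0) (by simpa using h0)
  rw [circleIntegral] at key
  have e : ∀ θ : ℝ, deriv (circleMap 0 r) θ • ((circleMap 0 r θ - 0)⁻¹ •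
      (1 - circleMap 0 r θ)⁻¹) = Complex.I * (1 - circleMap 0 r θ)⁻¹ := by
    intro θ
    have : circleMap 0 r θ ≠ 0 := circleMap_ne_center h0.ne'
    rw [deriv_circleMap, smul_eq_mul, smul_eq_mul, sub_zero]
    field_simp
  simp only [e] at key
  rw [intervalIntegral.integral_const_mul] at key
  have hI := Complex.I_ne_zero
  apply mul_left_cancel₀ hI
  rw [key]
  simp
  ring

lemma integral_circleMap_zpow (r : ℝ) (h0 : 0 < r) (m : ℤ) :
    ∫ θ in (0 : ℝ)..(2 * π), (circleMap 0 r θ) ^ m = if m = 0 then (2 * π : ℂ) else 0 := by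
  split_ifs with hm
  · simp [hm]
  · have key := circleIntegral.integral_sub_zpow_of_ne (n := m - 1) (by omega) (0 : ℂ) 0 r
    rw [circleIntegral] at key
    have e : ∀ θ : ℝ, deriv (circleMap 0 r) θ • ((circleMap 0 r θ - 0) ^ (m - 1)) =
        Complex.I * (circleMap 0 r θ) ^ m := by
      intro θ
      have : circleMap 0 r θ ≠ 0 := circleMap_ne_center h0.ne'
      rw [deriv_circleMap, smul_eq_mul, sub_zero, zpow_sub_one₀ this]
      field_simp
    simp only [e] at key
    rw [intervalIntegral.integral_const_mul] at key
    simpa using key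

lemma one_sub_circleMap_ne (r : ℝ) (h0 : 0 < r) (h1 : r < 1) (θ : ℝ) :
    1 - circleMap 0 r θ ≠ 0 := by
  intro h
  have h2 : ‖circleMap 0 r θ‖ = 1 := by
    rw [← sub_eq_zero.mp h, norm_one]
  rw [norm_circleMap_zero, abs_of_pos h0] at h2
  linarith

lemma continuous_zpow_div (r : ℝ) (h0 : 0 < r) (h1 : r < 1) (m : ℤ) :
    Continuous fun θ : ℝ => (circleMap 0 r θ) ^ m * (1 - circleMap 0 r θ)⁻¹ :=
  ((continuous_circleMap 0 r).zpow₀ m fun _ => Or.inl (circleMap_ne_center h0.ne')).mul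
    ((continuous_const.sub (continuous_circleMap 0 r)).inv₀ (one_sub_circleMap_ne r h0 h1))

/-- The constant Laurent coefficient of `z^m / (1 - z)` in `|z| < 1`. Since
`z^m / (1 - z) - z^(m+1) / (1 - z) = z^m`, it is determined by its value at `m = 0`. -/
lemma integral_zpow_div (r : ℝ) (h0 : 0 < r) (h1 : r < 1) (m : ℤ) :
    ∫ θ in (0 : ℝ)..(2 * π), (circleMap 0 r θ) ^ m * (1 - circleMap 0 r θ)⁻¹ =
      if m ≤ 0 then (2 * π : ℂ) else 0 := by
  have step : ∀ m : ℤ,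
      (∫ θ in (0 : ℝ)..(2 * π), (circleMap 0 r θ) ^ m * (1 - circleMap 0 r θ)⁻¹) -
      (∫ θ in (0 : ℝ)..(2 * π), (circleMap 0 r θ) ^ (m + 1) * (1 - circleMap 0 r θ)⁻¹) =
      if m = 0 then (2 * π : ℂ) else 0 := by
    intro m
    rw [← integral_circleMap_zpow r h0 m, ← intervalIntegral.integral_sub
      ((continuous_zpow_div r h0 h1 m).intervalIntegrable _ _)
      ((continuous_zpow_div r h0 h1 (m + 1)).intervalIntegrable _ _)]
    congr 1
    funext θ
    have h2 := one_sub_circleMap_ne r h0 h1 θ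
    rw [zpow_add_one₀ (circleMap_ne_center h0.ne')]
    field_simp
  induction m using Int.induction_on with
  | zero => simpa using integral_inv_one_sub r h0 h1
  | succ i ih =>
    have := step i
    rw [ih] at this
    rw [if_neg (by omega)]
    by_cases hi : (i : ℤ) = 0
    · rw [if_pos hi, if_pos hi.le] at this
      linear_combination -this
    · rw [if_neg hi, if_neg (by omega)] at this
      linear_combination -this
  | pred i ih =>
    have := step (-(i : ℤ) - 1)
    rw [sub_add_cancel, ih, if_pos (by omega), if_neg (by omega)] at this
    rw [if_pos (by omega)]
    linear_combination this

/-- The weight `a^m [m ≥ 0]`. -/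
noncomputable def weightE (a : ℂ) (m : ℤ) : ℂ := if 0 ≤ m then a ^ m else 0

/-- The weight `a^(m-2) [m ≥ 2]`. -/
noncomputable def weightG (a : ℂ) (m : ℤ) : ℂ := if 2 ≤ m then a ^ (m - 2) else 0

/-- The part of the integrand depending on one angle, for a walk whose endpoint has coordinate `p`
in that direction. -/
noncomputable def factor (a r : ℝ) (p : ℤ) (θ : ℝ) : ℂ :=
  ((a : ℂ) / ((r : ℂ) * Complex.exp (Complex.I * (θ : ℂ)))) ^ p *
    (((a : ℂ) ^ 2 - ((r : ℂ) * Complex.exp (Complex.I * (θ : ℂ))) ^ 2) /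
      ((a : ℂ) ^ 2 * (1 - (r : ℂ) * Complex.exp (Complex.I * (θ : ℂ)))))

lemma factor_eq (a r : ℝ) (ha : 0 < a) (h0 : 0 < r) (h1 : r < 1) (p : ℤ) (θ : ℝ) :
    factor a r p θ =
      (a : ℂ) ^ p * ((circleMap 0 r θ) ^ (-p) * (1 - circleMap 0 r θ)⁻¹) -
      (a : ℂ) ^ (p - 2) * ((circleMap 0 r θ) ^ (2 - p) * (1 - circleMap 0 r θ)⁻¹) := by
  have hz : (r : ℂ) * Complex.exp (Complex.I * (θ : ℂ)) = circleMap 0 r θ := by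
    simp [circleMap, mul_comm]
  have h2 := one_sub_circleMap_ne r h0 h1 θ
  have h3 : circleMap 0 r θ ≠ 0 := circleMap_ne_center h0.ne'
  have h4 : (a : ℂ) ≠ 0 := by exact_mod_cast ha.ne'
  unfold factor
  rw [hz]
  generalize circleMap 0 r θ = z at *
  rw [div_zpow, zpow_sub₀ h4, zpow_sub₀ h3, zpow_neg]
  have h5 : z ^ p ≠ 0 := zpow_ne_zero _ h3
  have e1 : (a : ℂ) ^ (2 : ℤ) = a ^ 2 := by norm_cast
  have e2 : z ^ (2 : ℤ) = z ^ 2 := by norm_cast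
  rw [e1, e2]
  field_simp

lemma continuous_factor (a r : ℝ) (ha : 0 < a) (h0 : 0 < r) (h1 : r < 1) (p : ℤ) :
    Continuous (factor a r p) := by
  rw [show factor a r p = _ from funext (factor_eq a r ha h0 h1 p)]
  exact (continuous_const.mul (continuous_zpow_div r h0 h1 _)).sub
    (continuous_const.mul (continuous_zpow_div r h0 h1 _))

lemma integral_factor (a r : ℝ) (ha : 0 < a) (h0 : 0 < r) (h1 : r < 1) (p : ℤ) :
    ∫ θ in Set.Icc (0 : ℝ) (2 * π), factor a r p θ =
      (2 * π : ℂ) * (weightE a p - weightG a p) := by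
  rw [integral_Icc_eq_integral_Ioc, ← intervalIntegral.integral_of_le (by positivity)]
  simp only [factor_eq a r ha h0 h1 p]
  rw [intervalIntegral.integral_sub
    (((continuous_zpow_div r h0 h1 _).intervalIntegrable _ _).const_mul _)
    (((continuous_zpow_div r h0 h1 _).intervalIntegrable _ _).const_mul _),
    intervalIntegral.integral_const_mul, intervalIntegral.integral_const_mul,
    integral_zpow_div r h0 h1, integral_zpow_div r h0 h1]
  unfold weightE weightG
  have e1 : (-p ≤ 0) = (0 ≤ p) := by simp
  have e2 : (2 - p ≤ 0) = (2 ≤ p) := by simp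
  simp only [e1, e2]
  split_ifs <;> ring

/-! ### The step operator and reflections -/

/-- The transfer operator of the walk: `(T f)(x) = ∑_{σ ∈ S} f (x + σ)`. -/
noncomputable def stepOp {d : ℕ} (S : Finset (Fin d → ℤ)) (f : (Fin d → ℤ) → ℂ)
    (x : Fin d → ℤ) : ℂ := ∑ σ ∈ S, f (x + σ)

/-- Summation over sequences of length `n + 1`, separating the first entry. -/
lemma sum_fin_cons {α : Type*} [Fintype α] (n : ℕ) (F : (Fin (n + 1) → α) → ℂ) :
    ∑ w, F w = ∑ a, ∑ w : Fin n → α, F (Fin.cons a w) := by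
  rw [← Fintype.sum_prod_type']
  exact (Fintype.sum_equiv (Fin.consEquiv fun _ => α) _ _ fun _ => rfl).symm

lemma sum_walks {d : ℕ} (S : Finset (Fin d → ℤ)) (f : (Fin d → ℤ) → ℂ) (n : ℕ) :
    ∀ x : Fin d → ℤ, ∑ w : Fin n → {σ // σ ∈ S}, f (x + ∑ i, (w i).1) = (stepOp S)^[n] f x := by
  induction n with
  | zero => intro x; simp
  | succ n ih =>
    intro x
    rw [sum_fin_cons, Function.iterate_succ_apply', stepOp,
      ← Finset.sum_coe_sort S (fun σ => (stepOp S)^[n] f (x + σ))]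
    refine Finset.sum_congr rfl fun σ _ => ?_
    rw [← ih]
    refine Finset.sum_congr rfl fun w _ => ?_
    simp [Fin.sum_univ_succ, add_assoc]

/-- Sign change of the coordinates in `t`. -/
def flipOn {d : ℕ} (t : Finset (Fin d)) (x : Fin d → ℤ) : Fin d → ℤ :=
  fun j => if j ∈ t then -(x j) else x j

lemma flipOn_flipOn {d : ℕ} (t : Finset (Fin d)) (x : Fin d → ℤ) :
    flipOn t (flipOn t x) = x := by
  funext j
  simp only [flipOn]
  split_ifs <;> simp

lemma flipOn_mem {d : ℕ} {S : Finset (Fin d → ℤ)} (hrefl : Reflectable d S)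
    (t : Finset (Fin d)) {σ : Fin d → ℤ} (hσ : σ ∈ S) : flipOn t σ ∈ S := by
  induction t using Finset.induction_on with
  | empty => exact (show flipOn ∅ σ = σ by funext j; simp [flipOn]) ▸ hσ
  | insert a t ha ih =>
    have h := hrefl _ ih a
    convert h using 1
    funext j
    by_cases hj : j = a
    · subst hj; simp [flipOn, ha]
    · simp [flipOn, hj]

/-- The iterates of the step operator commute with every affine map whose linear part is a
coordinate sign change. -/
lemma iterate_stepOp_comp {d : ℕ} {S : Finset (Fin d → ℤ)} (hrefl : Reflectable d S)
    (t : Finset (Fin d)) (R : (Fin d → ℤ) → (Fin d → ℤ))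
    (hR : ∀ x σ, R (x + σ) = R x + flipOn t σ) (f : (Fin d → ℤ) → ℂ) (n : ℕ) :
    ∀ x, (stepOp S)^[n] (f ∘ R) x = (stepOp S)^[n] f (R x) := by
  induction n with
  | zero => intro x; rfl
  | succ n ih =>
    intro x
    rw [Function.iterate_succ_apply', Function.iterate_succ_apply', stepOp, stepOp]
    refine Finset.sum_nbij' (flipOn t) (flipOn t) (fun σ h => flipOn_mem hrefl t h)
      (fun σ h => flipOn_mem hrefl t h) (fun σ _ => flipOn_flipOn t σ)
      (fun σ _ => flipOn_flipOn t σ) fun σ _ => ?_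
    rw [ih, hR]

lemma iterate_stepOp_neg {d : ℕ} (S : Finset (Fin d → ℤ)) (f : (Fin d → ℤ) → ℂ) (n : ℕ) :
    ∀ x, (stepOp S)^[n] (fun y => -f y) x = -(stepOp S)^[n] f x := by
  intro x
  rw [← sum_walks, ← sum_walks, Finset.sum_neg_distrib]

lemma sum_walks_reflect {d : ℕ} {S : Finset (Fin d → ℤ)} (hrefl : Reflectable d S)
    (t : Finset (Fin d)) (f : (Fin d → ℤ) → ℂ) (n : ℕ) :
    ∑ w : Fin n → {σ // σ ∈ S}, f (flipOn t (∑ i, (w i).1)) =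
      ∑ w : Fin n → {σ // σ ∈ S}, f (∑ i, (w i).1) := by
  have h := iterate_stepOp_comp hrefl t (flipOn t)
    (by intro x σ; funext j; simp only [flipOn, Pi.add_apply]; split_ifs <;> ring) f n 0
  rw [show flipOn t (0 : Fin d → ℤ) = 0 by funext j; simp [flipOn], ← sum_walks, ← sum_walks] at h
  simpa using h

/-- If `f` is odd under `x j ↦ -2 - x j`, then so are its iterates under the step operator, which
therefore vanish on the fixed hyperplane `x j = -1`. -/
lemma iterate_stepOp_eq_zero {d : ℕ} {S : Finset (Fin d → ℤ)} (hrefl : Reflectable d S)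
    (f : (Fin d → ℤ) → ℂ) (j : Fin d)
    (hf : ∀ x, f (Function.update x j (-2 - x j)) = -f x) (n : ℕ)
    (x : Fin d → ℤ) (hx : x j = -1) : (stepOp S)^[n] f x = 0 := by
  have h := iterate_stepOp_comp hrefl {j} (fun x => Function.update x j (-2 - x j))
    (by
      intro x σ
      funext i
      by_cases hi : i = j
      · subst hi; simp [flipOn]; ring
      · simp [flipOn, hi]) f n x
  have e : (f ∘ fun x => Function.update x j (-2 - x j)) = fun y => -f y := funext hf
  have e2 : Function.update x j (-2 - x j) = x := by
    rw [show (-2 - x j) = x j by omega, Function.update_eq_self]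
  rw [e, iterate_stepOp_neg] at h
  simp only [e2] at h
  exact CharZero.eq_neg_self_iff.mp h.symm

/-! ### The reflection principle -/

/-- The walk with steps `w` started at `x` stays in the orthant (including at time `0`). -/
def ConfinedFrom {d n : ℕ} (x : Fin d → ℤ) (w : Fin n → (Fin d → ℤ)) : Prop :=
  ∀ k : ℕ, k ≤ n → ∀ j,
    0 ≤ x j + ∑ i ∈ Finset.univ.filter (fun i : Fin n => (i : ℕ) < k), w i j

lemma confinedFrom_cons {d n : ℕ} (x σ : Fin d → ℤ) (hx : ∀ j, 0 ≤ x j)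
    (w : Fin n → (Fin d → ℤ)) :
    ConfinedFrom x (Fin.cons σ w : Fin (n + 1) → (Fin d → ℤ)) ↔ ConfinedFrom (x + σ) w := by
  have key : ∀ k j, ∑ i ∈ Finset.univ.filter (fun i : Fin (n + 1) => (i : ℕ) < k + 1),
      (Fin.cons σ w : Fin (n + 1) → (Fin d → ℤ)) i j =
      σ j + ∑ i ∈ Finset.univ.filter (fun i : Fin n => (i : ℕ) < k), w i j := by
    intro k j
    rw [Finset.sum_filter, Finset.sum_filter, Fin.sum_univ_succ]
    simp
  constructor
  · intro h k hk j
    have := h (k + 1) (by omega) j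
    rw [key] at this
    simpa [add_assoc] using this
  · intro h k hk j
    cases k with
    | zero => simpa using hx j
    | succ k =>
      have := h k (by omega) j
      rw [key]
      simpa [add_assoc] using this

/-- If all iterates of `f` vanish on the hyperplanes `x j = -1`, which a walk with small steps cannot
jump over, then the walks leaving the orthant contribute nothing in total. -/
lemma sum_confined {d : ℕ} {S : Finset (Fin d → ℤ)} (hstep : IsStepset d S)
    (f : (Fin d → ℤ) → ℂ)
    (hf : ∀ (n : ℕ) (x : Fin d → ℤ) (j : Fin d), x j = -1 → (stepOp S)^[n] f x = 0) (n : ℕ) :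
    ∀ x : Fin d → ℤ, (∀ j, 0 ≤ x j) →
      (∑ w : Fin n → {σ // σ ∈ S},
        if ConfinedFrom x (fun i => (w i).1) then f (x + ∑ i, (w i).1) else 0) =
      (stepOp S)^[n] f x := by
  induction n with
  | zero =>
    intro x hx
    simp only [Function.iterate_zero, id]
    rw [Fintype.sum_unique, if_pos]
    · simp
    · intro k _ j
      simpa using hx j
  | succ n ih =>
    intro x hx
    rw [sum_fin_cons, Function.iterate_succ_apply', stepOp,
      ← Finset.sum_coe_sort S (fun σ => (stepOp S)^[n] f (x + σ))]
    refine Finset.sum_congr rfl fun σ _ => ?_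
    have e : ∀ w : Fin n → {σ // σ ∈ S},
        (fun i => ((Fin.cons σ w : Fin (n + 1) → {σ // σ ∈ S}) i).1) =
        (Fin.cons σ.1 (fun i => (w i).1) : Fin (n + 1) → (Fin d → ℤ)) := by
      intro w
      funext i
      refine Fin.cases ?_ (fun i => ?_) i <;> simp
    have e2 : ∀ w : Fin n → {σ // σ ∈ S},
        x + ∑ i, ((Fin.cons σ w : Fin (n + 1) → {σ // σ ∈ S}) i).1 =
        (x + σ.1) + ∑ i, (w i).1 := by
      intro w
      simp [Fin.sum_univ_succ, add_assoc]
    simp only [e2]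
    simp only [e, confinedFrom_cons x σ.1 hx]
    by_cases hσ : ∀ j, 0 ≤ (x + σ.1) j
    · exact ih _ hσ
    · push Not at hσ
      obtain ⟨j, hj⟩ := hσ
      have h1 : (x + σ.1) j = -1 := by
        have := hstep σ.1 σ.2 j
        have := hx j
        simp only [Pi.add_apply] at hj ⊢
        omega
      rw [hf n _ j h1]
      refine Finset.sum_eq_zero fun w _ => if_neg fun hc => ?_
      have := hc 0 (Nat.zero_le _) j
      simp at this hj
      omega

lemma weight_odd (a : ℂ) (m : ℤ) :
    weightE a (-2 - m) - weightG a (-(-2 - m)) = -(weightE a m - weightG a (-m)) := by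
  unfold weightE weightG
  have e1 : (0 ≤ -2 - m) = (2 ≤ -m) := by apply propext; omega
  have e2 : (2 ≤ -(-2 - m)) = (0 ≤ m) := by apply propext; omega
  have e3 : -(-2 - m) - 2 = m := by ring
  have e4 : -m - 2 = -2 - m := by ring
  simp only [e1, e2, e3, e4]
  ring

/-- `G (p j)` and `G (-p j)` are interchangeable in sums over all walks: expand the product, and
reflect the coordinates carrying a factor `G`. -/
lemma sum_weight_symm {d : ℕ} {S : Finset (Fin d → ℤ)} (hrefl : Reflectable d S)
    (a : Fin d → ℂ) (n : ℕ) :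
    ∑ w : Fin n → {σ // σ ∈ S},
      ∏ j, (weightE (a j) ((∑ i, (w i).1) j) - weightG (a j) ((∑ i, (w i).1) j)) =
    ∑ w : Fin n → {σ // σ ∈ S},
      ∏ j, (weightE (a j) ((∑ i, (w i).1) j) - weightG (a j) (-((∑ i, (w i).1) j))) := by
  simp only [sub_eq_add_neg, Finset.prod_add]
  rw [Finset.sum_comm, Finset.sum_comm (s := Finset.univ)]
  refine Finset.sum_congr rfl fun t _ => ?_
  have h := sum_walks_reflect hrefl (Finset.univ \ t) (fun p =>
    (∏ j ∈ t, weightE (a j) (p j)) * ∏ j ∈ Finset.univ \ t, -weightG (a j) (p j)) n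
  rw [← h]
  refine Finset.sum_congr rfl fun w _ => ?_
  congr 1
  · refine Finset.prod_congr rfl fun j hj => ?_
    simp [flipOn, hj]
  · refine Finset.prod_congr rfl fun j hj => ?_
    simp only [flipOn, if_pos hj]

lemma sum_weight_eq_qcount {d : ℕ} {S : Finset (Fin d → ℤ)} (hstep : IsStepset d S)
    (hrefl : Reflectable d S) (α : Fin d → ℝ) (n : ℕ) :
    ∑ w : Fin n → {σ // σ ∈ S},
      ∏ j, (weightE (α j) ((∑ i, (w i).1) j) - weightG (α j) ((∑ i, (w i).1) j)) =
    ((qcount d S α n : ℝ) : ℂ) := by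
  rw [sum_weight_symm hrefl (fun j => (α j : ℂ)) n]
  set f : (Fin d → ℤ) → ℂ := fun p => ∏ j, (weightE (α j) (p j) - weightG (α j) (-(p j))) with hfdef
  have hodd : ∀ j x, f (Function.update x j (-2 - x j)) = -f x := by
    intro j x
    simp only [hfdef]
    rw [← Finset.mul_prod_erase Finset.univ _ (Finset.mem_univ j),
      ← Finset.mul_prod_erase Finset.univ _ (Finset.mem_univ j), Function.update_self, weight_odd,
      neg_mul]
    congr 2
    refine Finset.prod_congr rfl fun i hi => ?_
    rw [Function.update_of_ne (Finset.ne_of_mem_erase hi)]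
  have h1 := sum_walks S f n 0
  have h2 := sum_confined hstep f
    (fun n x j hx => iterate_stepOp_eq_zero hrefl f j (hodd j) n x hx) n 0 (fun _ => le_rfl)
  simp only [zero_add] at h1 h2
  rw [← h1] at h2
  rw [← h2, qcount, Complex.ofReal_sum, Finset.sum_filter]
  refine Finset.sum_congr rfl fun w _ => ?_
  have hc : ConfinedFrom 0 (fun i => (w i).1) ↔ Confined d (fun i => (w i).1) := by
    simp [ConfinedFrom, Confined]
  simp only [hc]
  split_ifs with h
  · simp only [hfdef, Complex.ofReal_prod]
    refine Finset.prod_congr rfl fun j _ => ?_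
    have hp : 0 ≤ (∑ i, (w i).1) j := by
      have := h n le_rfl j
      rw [Finset.filter_true_of_mem (fun i _ => i.2)] at this
      simpa using this
    rw [weightE, if_pos hp, weightG, if_neg (by omega), sub_zero]
    simp
  · rfl

/-! ### Expansion of the integrand -/

lemma integrand_eq {d : ℕ} (S : Finset (Fin d → ℤ)) (y c : Fin d → ℂ) (hy : ∀ j, y j ≠ 0) (n : ℕ) :
    inventoryC d S y ^ n * ∏ k, c k =
      ∑ w : Fin n → {σ // σ ∈ S}, ∏ k, (y k ^ ((∑ i, (w i).1) k) * c k) := by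
  rw [inventoryC, ← Finset.sum_coe_sort S (fun σ => ∏ j, y j ^ σ j), Fintype.sum_pow,
    Finset.sum_mul]
  refine Finset.sum_congr rfl fun w _ => ?_
  rw [Finset.prod_comm, ← Finset.prod_mul_distrib]
  refine Finset.prod_congr rfl fun k _ => ?_
  rw [Finset.sum_apply]
  congr 1
  generalize (Finset.univ : Finset (Fin n)) = s
  induction s using Finset.induction_on with
  | empty => simp
  | insert a s ha ih => rw [Finset.prod_insert ha, Finset.sum_insert ha, zpow_add₀ (hy k), ih]

/-- Exact torus-integral representation of the weighted counts, valid for any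
polyradius `ρ ∈ (0,1)^d`; here `z_k(θ) = ρ_k e^{iθ_k}`. -/
theorem torus_integral_representation
    (d : ℕ) (hd : 1 ≤ d) (S : Finset (Fin d → ℤ))
    (hstep : IsStepset d S) (hrefl : Reflectable d S) (hnt : NontrivialStepset d S)
    (α : Fin d → ℝ) (hα : ∀ j, 0 < α j)
    (ρ : Fin d → ℝ) (hρ : ∀ k, 0 < ρ k ∧ ρ k < 1) (n : ℕ) :
    ((qcount d S α n : ℝ) : ℂ) =
      (((2 * π) ^ d : ℝ) : ℂ)⁻¹ *
        ∫ θ in Set.univ.pi (fun _ : Fin d => Set.Icc (0 : ℝ) (2 * π)),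
          (inventoryC d S
              (fun j => (α j : ℂ) / ((ρ j : ℂ) * Complex.exp (Complex.I * (θ j : ℂ))))) ^ n *
            ∏ k, ((α k : ℂ) ^ 2 - ((ρ k : ℂ) * Complex.exp (Complex.I * (θ k : ℂ))) ^ 2) /
              ((α k : ℂ) ^ 2 * (1 - (ρ k : ℂ) * Complex.exp (Complex.I * (θ k : ℂ)))) := by
  have hexp : ∀ θ : Fin d → ℝ,
      (inventoryC d S
        (fun j => (α j : ℂ) / ((ρ j : ℂ) * Complex.exp (Complex.I * (θ j : ℂ))))) ^ n *
      ∏ k, ((α k : ℂ) ^ 2 - ((ρ k : ℂ) * Complex.exp (Complex.I * (θ k : ℂ))) ^ 2) /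
        ((α k : ℂ) ^ 2 * (1 - (ρ k : ℂ) * Complex.exp (Complex.I * (θ k : ℂ)))) =
      ∑ w : Fin n → {σ // σ ∈ S}, ∏ k, factor (α k) (ρ k) ((∑ i, (w i).1) k) (θ k) := by
    intro θ
    refine integrand_eq S _ _ (fun j => ?_) n
    have h1 : (α j : ℂ) ≠ 0 := by exact_mod_cast (hα j).ne'
    have h2 : (ρ j : ℂ) ≠ 0 := by exact_mod_cast (hρ j).1.ne'
    exact div_ne_zero h1 (mul_ne_zero h2 (Complex.exp_ne_zero _))
  simp only [hexp]
  rw [integral_finsetSum]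
  · have hint : ∀ w : Fin n → {σ // σ ∈ S},
        ∫ θ in Set.univ.pi (fun _ : Fin d => Set.Icc (0 : ℝ) (2 * π)),
          ∏ k, factor (α k) (ρ k) ((∑ i, (w i).1) k) (θ k) =
        (2 * π : ℂ) ^ d *
          ∏ k, (weightE (α k) ((∑ i, (w i).1) k) - weightG (α k) ((∑ i, (w i).1) k)) := by
      intro w
      rw [volume_pi, Measure.restrict_pi_pi, integral_fintype_prod_eq_prod]
      simp only [fun k => integral_factor (α k) (ρ k) (hα k) (hρ k).1 (hρ k).2]
      rw [Finset.prod_mul_distrib]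
      simp
    simp only [hint]
    rw [← Finset.mul_sum, sum_weight_eq_qcount hstep hrefl α n]
    have hpi : (2 * π : ℂ) ^ d ≠ 0 :=
      pow_ne_zero _ (mul_ne_zero two_ne_zero (by exact_mod_cast Real.pi_ne_zero))
    push_cast
    rw [inv_mul_cancel_left₀ hpi]
  · intro w _
    refine ContinuousOn.integrableOn_compact (isCompact_univ_pi fun _ => isCompact_Icc) ?_
    refine Continuous.continuousOn (continuous_finsetProd _ fun k _ => ?_)
    exact (continuous_factor (α k) (ρ k) (hα k) (hρ k).1 (hρ k).2 _).comp (continuous_apply k)
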